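/- (Trapping from rest, steady case.) Let g > 0 and let ζ: ℝ² → ℝ be a smooth time-independent surface elevation. Let (x(t), y(t)) be a C² solution of the steady John–Sclavounos equations starting from rest, i.e., ẋ(0) = ẏ(0) = 0, with initial position x₀ = (x(0), y(0)). Then ζ(x(t), y(t)) ≤ ζ(x₀) for all t in the interval of existence of the solution. -/

import Mathlib

noncomputable section

/-- Partial derivative of `ζ(x,y)` with respect to `x`. -/
def dx (ζ : ℝ × ℝ → ℝ) (p : ℝ × ℝ) : ℝ := fderiv ℝ ζ p (1, 0)

/-- Partial derivative of `ζ(x,y)` with respect to `y`. -/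
def dy (ζ : ℝ × ℝ → ℝ) (p : ℝ × ℝ) : ℝ := fderiv ℝ ζ p (0, 1)

def dxx (ζ : ℝ × ℝ → ℝ) (p : ℝ × ℝ) : ℝ := fderiv ℝ (dx ζ) p (1, 0)
def dxy (ζ : ℝ × ℝ → ℝ) (p : ℝ × ℝ) : ℝ := fderiv ℝ (dx ζ) p (0, 1)
def dyy (ζ : ℝ × ℝ → ℝ) (p : ℝ × ℝ) : ℝ := fderiv ℝ (dy ζ) p (0, 1)

/-- The steady John–Sclavounos equations for a horizontal trajectory `(x(t), y(t))` on
the time-independent surface `z = ζ(x,y)`, at time `t`, with gravity `g`: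
`(1+ζ_x²)ẍ + ζ_xζ_y ÿ + Q ζ_x = 0` and `(1+ζ_y²)ÿ + ζ_xζ_y ẍ + Q ζ_y = 0`, where
`Q = ζ_xx ẋ² + 2ζ_xy ẋẏ + ζ_yy ẏ² + g`. -/
def SteadyJSEq (g : ℝ) (ζ : ℝ × ℝ → ℝ) (x y : ℝ → ℝ) (t : ℝ) : Prop :=
  (1 + dx ζ (x t, y t) ^ 2) * deriv (deriv x) t
      + dx ζ (x t, y t) * dy ζ (x t, y t) * deriv (deriv y) t
      + (dxx ζ (x t, y t) * (deriv x t) ^ 2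
          + 2 * dxy ζ (x t, y t) * deriv x t * deriv y t
          + dyy ζ (x t, y t) * (deriv y t) ^ 2 + g) * dx ζ (x t, y t) = 0
  ∧ (1 + dy ζ (x t, y t) ^ 2) * deriv (deriv y) t
      + dx ζ (x t, y t) * dy ζ (x t, y t) * deriv (deriv x) t
      + (dxx ζ (x t, y t) * (deriv x t) ^ 2
          + 2 * dxy ζ (x t, y t) * deriv x t * deriv y t
          + dyy ζ (x t, y t) * (deriv y t) ^ 2 + g) * dy ζ (x t, y t) = 0

/-- The differential of `f` in terms of its partial derivatives. -/
lemma fderiv_prod_apply_eq (f : ℝ × ℝ → ℝ) (p : ℝ × ℝ) (a b : ℝ) :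
    fderiv ℝ f p (a, b) = a * fderiv ℝ f p (1, 0) + b * fderiv ℝ f p (0, 1) := by
  have h : ((a, b) : ℝ × ℝ) = a • ((1, 0) : ℝ × ℝ) + b • ((0, 1) : ℝ × ℝ) := by simp
  rw [h, map_add, map_smul, map_smul, smul_eq_mul, smul_eq_mul]

/-- Chain rule along a planar curve, in coordinates. -/
lemma hasDerivAt_comp_curve {f : ℝ × ℝ → ℝ} {x y : ℝ → ℝ} {t : ℝ}
    (hf : DifferentiableAt ℝ f (x t, y t)) (hx : DifferentiableAt ℝ x t)
    (hy : DifferentiableAt ℝ y t) :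
    HasDerivAt (fun s => f (x s, y s))
      (deriv x t * fderiv ℝ f (x t, y t) (1, 0) + deriv y t * fderiv ℝ f (x t, y t) (0, 1)) t := by
  rw [← fderiv_prod_apply_eq]
  exact hf.hasFDerivAt.comp_hasDerivAt t (hx.hasDerivAt.prodMk hy.hasDerivAt)

lemma differentiable_fderiv_apply {f : ℝ × ℝ → ℝ} (hf : ContDiff ℝ 2 f) (v : ℝ × ℝ) :
    Differentiable ℝ fun p => fderiv ℝ f p v :=
  ((hf.fderiv_right (m := 1) (by norm_num)).differentiable (by norm_num)).clm_apply
    (differentiable_const v)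

/-- Equality of mixed partial derivatives. -/
lemma fderiv_dy_eq_dxy {ζ : ℝ × ℝ → ℝ} (hζ : ContDiff ℝ 2 ζ) (p : ℝ × ℝ) :
    fderiv ℝ (dy ζ) p (1, 0) = dxy ζ p := by
  have hd : DifferentiableAt ℝ (fderiv ℝ ζ) p :=
    (hζ.fderiv_right (m := 1) (by norm_num)).differentiable (by norm_num) p
  have key (v w : ℝ × ℝ) :
      fderiv ℝ (fun q => fderiv ℝ ζ q v) p w = fderiv ℝ (fderiv ℝ ζ) p w v := by
    rw [fderiv_clm_apply hd (differentiableAt_const v)]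
    simp
  have hs : IsSymmSndFDerivAt ℝ ζ p := hζ.contDiffAt.isSymmSndFDerivAt (by simp)
  exact (key _ _).trans ((hs.eq _ _).trans (key _ _).symm)

/-- The Hamiltonian `g ζ + ½|u|² + ½(u·∇ζ)²` along a trajectory. -/
def steadyJSHamiltonian (g : ℝ) (ζ : ℝ × ℝ → ℝ) (x y : ℝ → ℝ) (t : ℝ) : ℝ :=
  g * ζ (x t, y t) + (deriv x t ^ 2 + deriv y t ^ 2) / 2
    + (deriv x t * dx ζ (x t, y t) + deriv y t * dy ζ (x t, y t)) ^ 2 / 2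

/-- The Hamiltonian is stationary wherever the steady John–Sclavounos equations hold. -/
lemma SteadyJSEq.hasDerivAt_hamiltonian {g : ℝ} {ζ : ℝ × ℝ → ℝ} (hζ : ContDiff ℝ 2 ζ)
    {x y : ℝ → ℝ} (hx : ContDiff ℝ 2 x) (hy : ContDiff ℝ 2 y) {t : ℝ}
    (h : SteadyJSEq g ζ x y t) :
    HasDerivAt (steadyJSHamiltonian g ζ x y) 0 t := by
  have hx1 : DifferentiableAt ℝ x t := hx.differentiable (by norm_num) t
  have hy1 : DifferentiableAt ℝ y t := hy.differentiable (by norm_num) t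
  have hx2 : HasDerivAt (deriv x) (deriv (deriv x) t) t :=
    (hx.differentiable_deriv_two t).hasDerivAt
  have hy2 : HasDerivAt (deriv y) (deriv (deriv y) t) t :=
    (hy.differentiable_deriv_two t).hasDerivAt
  have hz := hasDerivAt_comp_curve (hζ.differentiable (by norm_num) (x t, y t)) hx1 hy1
  have hzx : HasDerivAt (fun s => dx ζ (x s, y s)) _ t :=
    hasDerivAt_comp_curve (differentiable_fderiv_apply hζ (1, 0) _) hx1 hy1
  have hzy : HasDerivAt (fun s => dy ζ (x s, y s)) _ t :=
    hasDerivAt_comp_curve (differentiable_fderiv_apply hζ (0, 1) _) hx1 hy1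
  change HasDerivAt _ (deriv x t * dx ζ (x t, y t) + deriv y t * dy ζ (x t, y t)) t at hz
  change HasDerivAt _ (deriv x t * dxx ζ (x t, y t) + deriv y t * dxy ζ (x t, y t)) t at hzx
  change HasDerivAt _
    (deriv x t * fderiv ℝ (dy ζ) (x t, y t) (1, 0) + deriv y t * dyy ζ (x t, y t)) t at hzy
  rw [fderiv_dy_eq_dxy hζ] at hzy
  obtain ⟨h1, h2⟩ := h
  refine ((((hz.const_mul g).add (((hx2.pow 2).add (hy2.pow 2)).div_const 2)).add
    ((((hx2.mul hzx).add (hy2.mul hzy)).pow 2).div_const 2))).congr_deriv ?_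
  simp only [Pi.add_apply, Pi.mul_apply]
  push_cast
  linear_combination deriv x t * h1 + deriv y t * h2

/-- (Trapping from rest, steady case.) A particle obeying the steady
John–Sclavounos equations and starting from rest (`ẋ(0) = ẏ(0) = 0`) satisfies
`ζ(x(t), y(t)) ≤ ζ(x(0), y(0))` for all time. -/
theorem steadyJS_trapping_from_rest
    (g : ℝ) (hg : 0 < g) (ζ : ℝ × ℝ → ℝ) (hζ : ContDiff ℝ 2 ζ)
    (x y : ℝ → ℝ) (hx : ContDiff ℝ 2 x) (hy : ContDiff ℝ 2 y)
    (J : Set ℝ) (hJ : J.OrdConnected) (h0 : (0 : ℝ) ∈ J)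
    (hJS : ∀ t ∈ J, SteadyJSEq g ζ x y t)
    (hrest : deriv x 0 = 0 ∧ deriv y 0 = 0) :
    ∀ t ∈ J, ζ (x t, y t) ≤ ζ (x 0, y 0) := by
  intro t ht
  have hE : steadyJSHamiltonian g ζ x y t = steadyJSHamiltonian g ζ x y 0 := by
    have h := hJ.convex.norm_image_sub_le_of_norm_hasDerivWithin_le (C := 0)
      (fun s hs => ((hJS s hs).hasDerivAt_hamiltonian hζ hx hy).hasDerivWithinAt)
      (fun _ _ => norm_zero.le) h0 ht
    rwa [zero_mul, norm_le_zero_iff, sub_eq_zero] at h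
  simp only [steadyJSHamiltonian, hrest.1, hrest.2] at hE
  refine le_of_mul_le_mul_left ?_ hg
  nlinarith [sq_nonneg (deriv x t), sq_nonneg (deriv y t),
    sq_nonneg (deriv x t * dx ζ (x t, y t) + deriv y t * dy ζ (x t, y t))]

end
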